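/- Let G = (V,E) be a Δ-regular graph of girth at least 6, let 0 < λ < e/Δ, and let X be a random independent set drawn from the Gibbs distribution of the hard-core model on G at fugacity λ. Then for every vertex v and every ψ > 0, Pr(|X ∩ N(v)| > e + ψΔ/2) ≤ exp(−ψ²Δ/8), where N(v) is the neighborhood of v and e is Euler's number. -/

import Mathlib

/-!
Independent sets form a lower set, so deleting `u` maps the independent sets containing `u`
injectively into those avoiding `u`, and each deletion costs a factor `λ`. Hence, whatever happens
on the rest of the graph, `u` is occupied with probability at most `p = λ / (1 + λ)`, and the
exponential moments of `|X ∩ S|` are at most those of a binomial variable with parameters `|S|` and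
`p`. Chernoff's bound with Hoeffding's lemma then controls the upper tail, and `p * Δ ≤ λ * Δ < e`.
-/

open Finset MeasureTheory ProbabilityTheory

section TiltedPartition

variable {α R : Type*} [DecidableEq α]

/-- The partition function of the hard-core model with fugacity `lam`, for an arbitrary family `𝒜`
in place of the independent sets, tilted by a factor `a` for every element of `S` that is occupied.
Divided by `∑ X ∈ 𝒜, lam ^ #X`, it is the expectation of `a ^ #(X ∩ S)` under the Gibbs
distribution. -/
def tiltedPartition [CommSemiring R] (𝒜 : Finset (Finset α)) (lam a : R) (S : Finset α) : R :=
  ∑ X ∈ 𝒜, lam ^ #X * a ^ #(X ∩ S)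

lemma sum_eq_sum_nonMemberSubfamily_add_sum_memberSubfamily {M : Type*} [AddCommMonoid M]
    (𝒜 : Finset (Finset α)) (u : α) (f : Finset α → M) :
    ∑ X ∈ 𝒜, f X =
      ∑ X ∈ 𝒜.nonMemberSubfamily u, f X + ∑ X ∈ 𝒜.memberSubfamily u, f (insert u X) := by
  have hinj : Set.InjOn (insert u) (𝒜.memberSubfamily u : Set (Finset α)) := fun X hX Y hY hXY => by
    rw [← erase_insert (mem_memberSubfamily.1 hX).2, hXY, erase_insert (mem_memberSubfamily.1 hY).2]
  rw [← sum_image hinj, image_insert_memberSubfamily, add_comm]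
  exact (sum_filter_add_sum_filter_not 𝒜 (u ∈ ·) f).symm

namespace tiltedPartition

section CommSemiring

variable [CommSemiring R]

lemma eq_add_mul (𝒜 : Finset (Finset α)) (lam a : R) {u : α} {S : Finset α} (hu : u ∉ S) :
    tiltedPartition 𝒜 lam a S =
      tiltedPartition (𝒜.nonMemberSubfamily u) lam a S +
        lam * tiltedPartition (𝒜.memberSubfamily u) lam a S := by
  simp only [tiltedPartition, mul_sum]
  rw [sum_eq_sum_nonMemberSubfamily_add_sum_memberSubfamily 𝒜 u]
  congr 1
  refine sum_congr rfl fun X hX => ?_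
  rw [card_insert_of_notMem (mem_memberSubfamily.1 hX).2, insert_inter_of_notMem hu, pow_succ',
    mul_assoc]

lemma insert_eq_add_mul (𝒜 : Finset (Finset α)) (lam a : R) (u : α) (S : Finset α) :
    tiltedPartition 𝒜 lam a (insert u S) =
      tiltedPartition (𝒜.nonMemberSubfamily u) lam a S +
        lam * a * tiltedPartition (𝒜.memberSubfamily u) lam a S := by
  simp only [tiltedPartition, mul_sum]
  rw [sum_eq_sum_nonMemberSubfamily_add_sum_memberSubfamily 𝒜 u]
  congr 1
  · refine sum_congr rfl fun X hX => ?_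
    rw [inter_insert_of_notMem (mem_nonMemberSubfamily.1 hX).2]
  · refine sum_congr rfl fun X hX => ?_
    have huX := (mem_memberSubfamily.1 hX).2
    rw [card_insert_of_notMem huX, ← insert_inter_distrib,
      card_insert_of_notMem fun h => huX (mem_inter.1 h).1]
    ring

end CommSemiring

section OrderedRing

variable [CommRing R] [PartialOrder R] [IsOrderedRing R] {𝒜 ℬ : Finset (Finset α)} {lam a : R}

lemma mono_family (h : 𝒜 ⊆ ℬ) (hlam : 0 ≤ lam) (ha : 0 ≤ a) (S : Finset α) :
    tiltedPartition 𝒜 lam a S ≤ tiltedPartition ℬ lam a S :=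
  sum_le_sum_of_subset_of_nonneg h fun _ _ _ => by positivity

lemma mul_insert_le (h𝒜 : IsLowerSet (𝒜 : Set (Finset α))) (hlam : 0 ≤ lam) (ha : 1 ≤ a)
    {u : α} {S : Finset α} (hu : u ∉ S) :
    (1 + lam) * tiltedPartition 𝒜 lam a (insert u S) ≤
      (1 + lam * a) * tiltedPartition 𝒜 lam a S := by
  rw [insert_eq_add_mul, eq_add_mul 𝒜 lam a hu]
  set A := tiltedPartition (𝒜.nonMemberSubfamily u) lam a S
  set B := tiltedPartition (𝒜.memberSubfamily u) lam a S
  have hBA : B ≤ A :=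
    mono_family h𝒜.memberSubfamily_subset_nonMemberSubfamily hlam (zero_le_one.trans ha) S
  have hgap : 0 ≤ lam * (a - 1) * (A - B) :=
    mul_nonneg (mul_nonneg hlam (sub_nonneg.2 ha)) (sub_nonneg.2 hBA)
  linear_combination hgap

lemma pow_card_mul_le (h𝒜 : IsLowerSet (𝒜 : Set (Finset α))) (hlam : 0 ≤ lam) (ha : 1 ≤ a)
    (S : Finset α) :
    (1 + lam) ^ #S * tiltedPartition 𝒜 lam a S ≤ (1 + lam * a) ^ #S * ∑ X ∈ 𝒜, lam ^ #X := by
  induction S using Finset.induction_on with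
  | empty => simp [tiltedPartition]
  | insert u S hu ih =>
    have hlam1 : 0 ≤ 1 + lam := add_nonneg zero_le_one hlam
    have hlama : 0 ≤ 1 + lam * a :=
      add_nonneg zero_le_one (mul_nonneg hlam (zero_le_one.trans ha))
    rw [card_insert_of_notMem hu]
    calc (1 + lam) ^ (#S + 1) * tiltedPartition 𝒜 lam a (insert u S)
        = (1 + lam) ^ #S * ((1 + lam) * tiltedPartition 𝒜 lam a (insert u S)) := by ring
      _ ≤ (1 + lam) ^ #S * ((1 + lam * a) * tiltedPartition 𝒜 lam a S) :=
        mul_le_mul_of_nonneg_left (mul_insert_le h𝒜 hlam ha hu) (pow_nonneg hlam1 _)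
      _ = (1 + lam * a) * ((1 + lam) ^ #S * tiltedPartition 𝒜 lam a S) := by ring
      _ ≤ (1 + lam * a) * ((1 + lam * a) ^ #S * ∑ X ∈ 𝒜, lam ^ #X) :=
        mul_le_mul_of_nonneg_left ih hlama
      _ = (1 + lam * a) ^ (#S + 1) * ∑ X ∈ 𝒜, lam ^ #X := by ring

end OrderedRing

end tiltedPartition

end TiltedPartition

lemma bernoulli_mgf_le_exp (p : unitInterval) (t : ℝ) :
    p * Real.exp t + (1 - p) ≤ Real.exp (p * t + t ^ 2 / 8) := by
  let μ : Measure ℝ := bernoulliMeasure 1 0 p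
  have hIcc : ∀ᵐ x ∂μ, id x ∈ Set.Icc (0 : ℝ) 1 :=
    bernoulliMeasure_apply_of_notMem_of_notMem p measurableSet_Icc.compl (by simp) (by simp)
  have hoeffding : p * Real.exp (t * (1 - p)) + (1 - p) * Real.exp (-(t * p)) ≤
      Real.exp (t ^ 2 / 8) :=
    calc p * Real.exp (t * (1 - p)) + (1 - p) * Real.exp (-(t * p))
        = mgf (fun x => id x - μ[id]) μ t := by simp [mgf, μ, integral_bernoulliMeasure]
      _ ≤ Real.exp (((‖(1 : ℝ) - 0‖₊ / 2) ^ 2 : NNReal) * t ^ 2 / 2) :=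
        (hasSubgaussianMGF_of_mem_Icc aemeasurable_id hIcc).mgf_le t
      _ = Real.exp (t ^ 2 / 8) := by
        norm_num
        ring
  have hexp_one : Real.exp (p * t) * Real.exp (t * (1 - p)) = Real.exp t := by
    rw [← Real.exp_add]
    ring_nf
  have hexp_zero : Real.exp (p * t) * Real.exp (-(t * p)) = 1 := by
    rw [← Real.exp_add, mul_comm t, add_neg_cancel, Real.exp_zero]
  calc p * Real.exp t + (1 - p)
      = Real.exp (p * t) * (p * Real.exp (t * (1 - p)) + (1 - p) * Real.exp (-(t * p))) := by
        linear_combination -p * hexp_one - (1 - p) * hexp_zero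
    _ ≤ Real.exp (p * t) * Real.exp (t ^ 2 / 8) :=
        mul_le_mul_of_nonneg_left hoeffding (Real.exp_pos _).le
    _ = Real.exp (p * t + t ^ 2 / 8) := (Real.exp_add _ _).symm

lemma one_add_mul_exp_le {lam : ℝ} (hlam : 0 ≤ lam) (t : ℝ) :
    1 + lam * Real.exp t ≤ (1 + lam) * Real.exp (lam / (1 + lam) * t + t ^ 2 / 8) := by
  have hpos : 0 < 1 + lam := by positivity
  have hp : lam / (1 + lam) ∈ unitInterval :=
    unitInterval.div_mem hlam hpos.le (le_add_of_nonneg_left zero_le_one)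
  calc 1 + lam * Real.exp t
      = (1 + lam) * (lam / (1 + lam) * Real.exp t + (1 - lam / (1 + lam))) := by
        field_simp
        ring
    _ ≤ (1 + lam) * Real.exp (lam / (1 + lam) * t + t ^ 2 / 8) :=
        mul_le_mul_of_nonneg_left (bernoulli_mgf_le_exp ⟨_, hp⟩ t) hpos.le

section Tail

variable {α : Type*} [DecidableEq α] {𝒜 : Finset (Finset α)} {lam : ℝ}

lemma tiltedPartition_exp_le (h𝒜 : IsLowerSet (𝒜 : Set (Finset α))) (hlam : 0 ≤ lam) {t : ℝ}
    (ht : 0 ≤ t) (S : Finset α) :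
    tiltedPartition 𝒜 lam (Real.exp t) S ≤
      Real.exp (#S * (lam / (1 + lam) * t + t ^ 2 / 8)) * ∑ X ∈ 𝒜, lam ^ #X := by
  refine le_of_mul_le_mul_left ?_ (by positivity : 0 < (1 + lam) ^ #S)
  calc (1 + lam) ^ #S * tiltedPartition 𝒜 lam (Real.exp t) S
      ≤ (1 + lam * Real.exp t) ^ #S * ∑ X ∈ 𝒜, lam ^ #X :=
        tiltedPartition.pow_card_mul_le h𝒜 hlam (Real.one_le_exp ht) S
    _ ≤ ((1 + lam) * Real.exp (lam / (1 + lam) * t + t ^ 2 / 8)) ^ #S * ∑ X ∈ 𝒜, lam ^ #X := by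
        gcongr
        exact one_add_mul_exp_le hlam t
    _ = (1 + lam) ^ #S *
          (Real.exp (#S * (lam / (1 + lam) * t + t ^ 2 / 8)) * ∑ X ∈ 𝒜, lam ^ #X) := by
        rw [mul_pow, ← Real.exp_nat_mul, mul_assoc]

lemma sum_filter_lt_card_inter_le (𝒜 : Finset (Finset α)) (hlam : 0 ≤ lam) {t : ℝ} (ht : 0 ≤ t)
    (S : Finset α) (r : ℝ) :
    ∑ X ∈ 𝒜 with r < #(X ∩ S), lam ^ #X ≤
      Real.exp (-(t * r)) * tiltedPartition 𝒜 lam (Real.exp t) S := by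
  rw [tiltedPartition, mul_sum]
  calc ∑ X ∈ 𝒜 with r < #(X ∩ S), lam ^ #X
      ≤ ∑ X ∈ 𝒜 with r < #(X ∩ S), Real.exp (-(t * r)) * (lam ^ #X * Real.exp t ^ #(X ∩ S)) := by
        refine sum_le_sum fun X hX => ?_
        have hr : t * r ≤ t * #(X ∩ S) := mul_le_mul_of_nonneg_left (mem_filter.1 hX).2.le ht
        rw [mul_left_comm, ← Real.exp_nat_mul, ← Real.exp_add]
        exact le_mul_of_one_le_right (by positivity) (Real.one_le_exp (by linarith))
    _ ≤ ∑ X ∈ 𝒜, Real.exp (-(t * r)) * (lam ^ #X * Real.exp t ^ #(X ∩ S)) :=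
        sum_le_sum_of_subset_of_nonneg (filter_subset _ _) fun _ _ _ => by positivity

theorem stmt_17_general (h𝒜 : IsLowerSet (𝒜 : Set (Finset α))) (h𝒜_nonempty : 𝒜.Nonempty)
    (hlam : 0 ≤ lam) {S : Finset α} {Δ μ ψ : ℝ} (hS : #S ≤ Δ) (hμ : lam / (1 + lam) * Δ ≤ μ)
    (hψ : 0 ≤ ψ) :
    (∑ X ∈ 𝒜 with μ + ψ * Δ / 2 < #(X ∩ S), lam ^ #X) / ∑ X ∈ 𝒜, lam ^ #X ≤
      Real.exp (-ψ ^ 2 * Δ / 2) := by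
  have hZ : 0 < ∑ X ∈ 𝒜, lam ^ #X := by
    have hempty : ∅ ∈ 𝒜 := h𝒜_nonempty.elim fun X hX => h𝒜 (empty_subset X) hX
    exact sum_pos' (fun _ _ => by positivity) ⟨∅, hempty, by simp⟩
  rw [div_le_iff₀ hZ]
  -- `t = 2 * ψ` minimizes the Chernoff exponent `-t * (ψ * Δ / 2) + Δ * t ^ 2 / 8`.
  set t := 2 * ψ with ht_def
  have ht : 0 ≤ t := by positivity
  have hexponent :
      -(t * (μ + ψ * Δ / 2)) + #S * (lam / (1 + lam) * t + t ^ 2 / 8) ≤ -ψ ^ 2 * Δ / 2 := by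
    calc -(t * (μ + ψ * Δ / 2)) + #S * (lam / (1 + lam) * t + t ^ 2 / 8)
        ≤ -(t * (μ + ψ * Δ / 2)) + Δ * (lam / (1 + lam) * t + t ^ 2 / 8) := by gcongr
      _ = t * (lam / (1 + lam) * Δ - μ) - ψ ^ 2 * Δ / 2 := by rw [ht_def]; ring
      _ ≤ -ψ ^ 2 * Δ / 2 := by
        linarith [mul_nonpos_of_nonneg_of_nonpos ht (sub_nonpos.2 hμ)]
  calc ∑ X ∈ 𝒜 with μ + ψ * Δ / 2 < #(X ∩ S), lam ^ #X
      ≤ Real.exp (-(t * (μ + ψ * Δ / 2))) * tiltedPartition 𝒜 lam (Real.exp t) S :=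
        sum_filter_lt_card_inter_le 𝒜 hlam ht S _
    _ ≤ Real.exp (-(t * (μ + ψ * Δ / 2))) *
          (Real.exp (#S * (lam / (1 + lam) * t + t ^ 2 / 8)) * ∑ X ∈ 𝒜, lam ^ #X) := by
        gcongr
        exact tiltedPartition_exp_le h𝒜 hlam ht S
    _ ≤ Real.exp (-ψ ^ 2 * Δ / 2) * ∑ X ∈ 𝒜, lam ^ #X := by
        rw [← mul_assoc, ← Real.exp_add]
        gcongr

end Tail

lemma isLowerSet_filter_forall_not_adj {V : Type*} [Fintype V] (G : SimpleGraph V)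
    [DecidablePred fun X : Finset V => ∀ u ∈ X, ∀ w ∈ X, ¬ G.Adj u w] :
    IsLowerSet (({X | ∀ u ∈ X, ∀ w ∈ X, ¬ G.Adj u w} : Finset (Finset V)) : Set (Finset V)) := by
  intro X Y hYX hX
  rw [mem_coe, mem_filter_univ] at hX ⊢
  exact fun u hu w hw => hX u (hYX hu) w (hYX hw)

/-- **Few occupied neighbors** (from the proof of Lemma 4.2). For a `Δ`-regular
graph of girth at least 6 and `0 < λ < e/Δ`, a random independent set `X` from the
Gibbs distribution at fugacity `λ` satisfies, for every vertex `v` and every `ψ > 0`,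
`Pr(|X ∩ N(v)| > e + ψΔ/2) ≤ exp(-ψ²Δ/8)`. -/
theorem stmt_17 {V : Type*} [Fintype V] [DecidableEq V]
    (G : SimpleGraph V) [DecidableRel G.Adj]
    (Δ : ℕ)
    (hreg : G.IsRegularOfDegree Δ)
    (hgirth : 6 ≤ G.egirth)
    (lam : ℝ) (hlam0 : 0 < lam) (hlamu : lam < Real.exp 1 / (Δ : ℝ))
    -- the partition function at fugacity lam
    (Z : ℝ)
    (hZ : Z = ∑ X ∈ Finset.univ.filter
      (fun X : Finset V => ∀ u ∈ X, ∀ v ∈ X, ¬ G.Adj u v), lam ^ X.card)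
    (v : V) (ψ : ℝ) (hψ : 0 < ψ) :
    -- probability, under the Gibbs distribution, that v has many occupied neighbors
    (∑ X ∈ Finset.univ.filter (fun X : Finset V =>
        (∀ u ∈ X, ∀ w ∈ X, ¬ G.Adj u w) ∧
        Real.exp 1 + ψ * (Δ : ℝ) / 2 < ((X ∩ G.neighborFinset v).card : ℝ)),
      lam ^ X.card) / Z
      ≤ Real.exp (-ψ ^ 2 * (Δ : ℝ) / 8) := by
  have hmean : lam / (1 + lam) * Δ ≤ Real.exp 1 :=
    calc lam / (1 + lam) * Δ ≤ lam * Δ :=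
          mul_le_mul_of_nonneg_right (div_le_self hlam0.le (by linarith)) Δ.cast_nonneg
      _ ≤ Real.exp 1 := mul_le_of_le_div₀ (Real.exp_pos 1).le Δ.cast_nonneg hlamu.le
  have hdeg : (#(G.neighborFinset v) : ℝ) ≤ Δ := by simp [hreg.degree_eq v]
  rw [hZ, ← Finset.filter_filter]
  exact (stmt_17_general (isLowerSet_filter_forall_not_adj G) ⟨∅, by simp⟩ hlam0.le hdeg hmean
    hψ.le).trans (Real.exp_le_exp.2 (by linarith [show 0 ≤ ψ ^ 2 * Δ by positivity]))
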